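/- Let E ⊆ ℝ^d be a nonempty Borel set. Then dim_H(E) = sup{ ldim_H(μ) : μ a Borel probability measure on ℝ^d with μ(E) = 1 }, where ldim_H(μ) is the lower Hausdorff dimension of μ. -/

import Mathlib

open MeasureTheory Filter Metric Set

/-- The lower local dimension of a measure at a point:
`liminf_{r→0} log μ(B(x,r)) / log r`. -/
noncomputable def lowerLocalDim {X : Type*} [MetricSpace X] [MeasurableSpace X]
    (μ : Measure X) (x : X) : EReal :=
  Filter.liminf (fun r : ℝ =>
    ((Real.log (μ (Metric.ball x r)).toReal / Real.log r : ℝ) : EReal))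
    (nhdsWithin 0 (Set.Ioi 0))

/-- The lower Hausdorff dimension of a measure: the `μ`-essential infimum of the
lower local dimensions. -/
noncomputable def lowerHausdorffDim {X : Type*} [MetricSpace X] [MeasurableSpace X]
    (μ : Measure X) : EReal :=
  essInf (lowerLocalDim μ) μ

/-! One inequality is the mass distribution principle: if `μ E = 1` and the local dimension exceeds
`s` almost everywhere, then `E` cannot be `μH[s]`-null.

For the other one, fix `s < t < dimH E` and let `ψ` be the kernel consisting of bump functions at
the points of dyadic nets, with weights `2 ^ (k * s / 2)` at scale `2⁻ᵏ`. The `ℓ²` capacity of a set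
`A` is the least norm of a nonnegative `g ∈ ℓ²` whose potential `∑ i, g i * ψ i` is at least `1` on
`A`. At each point where the potential is at least `1`, some bump of scale `2⁻ᵏ` around that point
has a coefficient at least of the order `2 ^ (-k * t / 2)`; these bumps form a cover showing that
sets of capacity zero are `μH[t]`-null. So `E` has positive capacity. The capacity is a Choquet
capacity, hence some compact `K ⊆ E` has positive capacity too, and the Hahn-Banach and Riesz
theorems turn it into a measure on `K` of finite energy `∑ i, (∫ ψ i) ^ 2`. For a measure of finite
energy the potential with coefficients `∫ ψ i` is finite almost everywhere, which bounds the masses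
of the balls around almost every point by a multiple of `r ^ s`. -/

section ClosedConvex

variable {H : Type*} [NormedAddCommGroup H] [InnerProductSpace ℝ H]

theorem exists_forall_norm_sub_sq_le_of_convex [CompleteSpace H] {C : Set H} (hconv : Convex ℝ C)
    (hclosed : IsClosed C) (hne : C.Nonempty) :
    ∃ x ∈ C, ∀ y ∈ C, ‖y - x‖ ^ 2 ≤ ‖y‖ ^ 2 - ‖x‖ ^ 2 := by
  obtain ⟨x, hx, hmin⟩ := exists_norm_eq_iInf_of_complete_convex hne hclosed.isComplete hconv 0
  refine ⟨x, hx, fun y hy => ?_⟩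
  have hinner := (norm_eq_iInf_iff_real_inner_le_zero hconv hx).1 hmin y hy
  rw [zero_sub, inner_neg_left, inner_sub_right, real_inner_self_eq_norm_sq] at hinner
  rw [norm_sub_sq_real, real_inner_comm]
  linarith

-- The points of least norm form a Cauchy sequence, since `‖y - x‖ ^ 2 ≤ ‖y‖ ^ 2 - ‖x‖ ^ 2` whenever
-- `x` has least norm in a convex set containing `y`.
theorem exists_mem_iInter_norm_le_of_antitone_convex [CompleteSpace H] {C : ℕ → Set H}
    (hanti : Antitone C) (hconv : ∀ n, Convex ℝ (C n)) (hclosed : ∀ n, IsClosed (C n)) {L : ℝ}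
    (hL : ∀ n, ∃ x ∈ C n, ‖x‖ ≤ L) : ∃ x ∈ ⋂ n, C n, ‖x‖ ≤ L := by
  choose x hxC hx using fun n => exists_forall_norm_sub_sq_le_of_convex (hconv n)
    (hclosed n) (let ⟨y, hy, _⟩ := hL n; ⟨y, hy⟩)
  have hdist : ∀ m n, m ≤ n → ‖x n - x m‖ ^ 2 ≤ ‖x n‖ ^ 2 - ‖x m‖ ^ 2 := fun m n hmn =>
    hx m _ (hanti hmn (hxC n))
  have hnorm : ∀ n, ‖x n‖ ≤ L := fun n => by
    obtain ⟨y, hyC, hyL⟩ := hL n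
    have := hx n y hyC
    exact (abs_le_of_sq_le_sq' (by nlinarith [sq_nonneg ‖y - x n‖]) (norm_nonneg y)).2.trans hyL
  have hmono : Monotone fun n => ‖x n‖ ^ 2 := fun m n hmn =>
    sub_nonneg.1 ((sq_nonneg _).trans (hdist m n hmn))
  have hbdd : BddAbove (range fun n => ‖x n‖ ^ 2) :=
    ⟨L ^ 2, forall_mem_range.2 fun n => pow_le_pow_left₀ (norm_nonneg _) (hnorm n) 2⟩
  have hcauchySq := (tendsto_atTop_ciSup hmono hbdd).cauchySeq
  have hcauchy : CauchySeq x := by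
    refine Metric.cauchySeq_iff'.2 fun ε hε => ?_
    obtain ⟨N, hN⟩ := Metric.cauchySeq_iff'.1 hcauchySq (ε ^ 2) (by positivity)
    refine ⟨N, fun n hn => ?_⟩
    rw [dist_eq_norm]
    exact lt_of_pow_lt_pow_left₀ 2 hε.le
      ((hdist N n hn).trans_lt ((le_abs_self _).trans_lt (hN n hn)))
  obtain ⟨y, hy⟩ := cauchySeq_tendsto_of_complete hcauchy
  refine ⟨y, mem_iInter.2 fun n => (hclosed n).mem_of_tendsto hy ?_,
    le_of_tendsto hy.norm (Eventually.of_forall hnorm)⟩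
  filter_upwards [eventually_ge_atTop n] with m hm using hanti hm (hxC m)

end ClosedConvex

section Potential

open scoped ENNReal NNReal lp

variable {X I : Type*} {ψ : I → X → ℝ≥0} {f f₁ f₂ : X → ℝ≥0∞} {g h : lp (fun _ : I => ℝ) 2}

/-- The potential `∑ i, g i * ψ i` of a square-summable family `g` of coefficients with respect to
the kernel `ψ`. It only sees the positive parts of the coefficients. -/
noncomputable def potential (ψ : I → X → ℝ≥0) (g : lp (fun _ : I => ℝ) 2) (x : X) : ℝ≥0∞ :=
  ∑' i, ENNReal.ofReal (g i) * ψ i x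

theorem potential_mono (hgh : ∀ i, g i ≤ h i) : potential ψ g ≤ potential ψ h := fun _ =>
  ENNReal.tsum_le_tsum fun i => by gcongr; exact hgh i

theorem potential_add (hg : ∀ i, 0 ≤ g i) (hh : ∀ i, 0 ≤ h i) :
    potential ψ (g + h) = potential ψ g + potential ψ h := by
  funext x
  simp only [potential, Pi.add_apply, lp.coeFn_add, ENNReal.ofReal_add (hg _) (hh _), add_mul,
    ENNReal.tsum_add]

theorem potential_smul {c : ℝ} (hc : 0 ≤ c) :
    potential ψ (c • g) = ENNReal.ofReal c • potential ψ g := by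
  funext x
  simp only [potential, Pi.smul_apply, lp.coeFn_smul, smul_eq_mul, ENNReal.ofReal_mul hc, mul_assoc,
    ENNReal.tsum_mul_left]

theorem lowerSemicontinuous_potential [TopologicalSpace X] (hψ : ∀ i, Continuous (ψ i))
    (g : lp (fun _ : I => ℝ) 2) : LowerSemicontinuous (potential ψ g) :=
  lowerSemicontinuous_tsum fun i => Continuous.lowerSemicontinuous <|
    (ENNReal.continuous_const_mul ENNReal.ofReal_ne_top).comp
      (ENNReal.continuous_coe.comp (hψ i))

/-- The nonnegative square-summable families whose potential dominates `f`, the competitors in the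
definition of `upperNorm`. -/
def majorants (ψ : I → X → ℝ≥0) (f : X → ℝ≥0∞) : Set (lp (fun _ : I => ℝ) 2) :=
  {g | (∀ i, 0 ≤ g i) ∧ f ≤ potential ψ g}

theorem majorants_anti (hf : f₁ ≤ f₂) : majorants ψ f₂ ⊆ majorants ψ f₁ := fun _ hg =>
  ⟨hg.1, hf.trans hg.2⟩

theorem majorants_iSup {ι : Type*} [Nonempty ι] (f : ι → X → ℝ≥0∞) :
    majorants ψ (⨆ n, f n) = ⋂ n, majorants ψ (f n) := by
  ext g
  simp only [majorants, mem_ofPred_eq, iSup_le_iff, mem_iInter, forall_and, forall_const]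

theorem mem_majorants_of_le (hg : g ∈ majorants ψ f) (hgh : ∀ i, g i ≤ h i) :
    h ∈ majorants ψ f :=
  ⟨fun i => (hg.1 i).trans (hgh i), hg.2.trans (potential_mono hgh)⟩

theorem sum_single_mem_majorants [DecidableEq I] {F : Finset I} {b : I → ℝ≥0}
    (hf : ∀ x, f x ≤ ∑ i ∈ F, (b i : ℝ≥0∞) * ψ i x) :
    ∑ i ∈ F, lp.single 2 i (b i : ℝ) ∈ majorants ψ f := by
  have hcoeff : ∀ i, (∑ j ∈ F, lp.single 2 j (b j : ℝ) : lp (fun _ : I => ℝ) 2) i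
      = if i ∈ F then (b i : ℝ) else 0 := fun i => by
    rw [lp.coeFn_sum, Finset.sum_apply]
    simp only [lp.single_apply, Pi.single_apply, Finset.sum_ite_eq]
  refine ⟨fun i => ?_, fun x => (hf x).trans (le_trans (Finset.sum_le_sum fun i hi => ?_)
    (ENNReal.sum_le_tsum F))⟩
  · rw [hcoeff]
    exact ite_nonneg (b i).coe_nonneg le_rfl
  · rw [hcoeff, if_pos hi, ENNReal.ofReal_coe_nnreal]

theorem add_mem_majorants (hg : g ∈ majorants ψ f₁) (hh : h ∈ majorants ψ f₂) :
    g + h ∈ majorants ψ (f₁ + f₂) :=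
  ⟨fun i => add_nonneg (hg.1 i) (hh.1 i), by
    rw [potential_add hg.1 hh.1]; exact add_le_add hg.2 hh.2⟩

theorem smul_mem_majorants {c : ℝ} (hc : 0 ≤ c) (hg : g ∈ majorants ψ f) :
    c • g ∈ majorants ψ (ENNReal.ofReal c • f) :=
  ⟨fun i => mul_nonneg hc (hg.1 i), by
    rw [potential_smul hc]; exact smul_le_smul_of_nonneg_left hg.2 zero_le⟩

theorem convex_majorants (ψ : I → X → ℝ≥0) (f : X → ℝ≥0∞) : Convex ℝ (majorants ψ f) := by
  intro g hg h hh a b ha hb hab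
  have := add_mem_majorants (smul_mem_majorants ha hg) (smul_mem_majorants hb hh)
  rwa [← add_smul, ← ENNReal.ofReal_add ha hb, hab, ENNReal.ofReal_one, one_smul] at this

theorem exists_lp_eq_abs (g : lp (fun _ : I => ℝ) 2) :
    ∃ h : lp (fun _ : I => ℝ) 2, (∀ i, h i = |g i|) ∧ ‖h‖ = ‖g‖ := by
  let h : lp (fun _ : I => ℝ) 2 := ⟨fun i => |g i|, (lp.memℓp g).norm⟩
  have hcoeff : ∀ i, ‖h i‖ = ‖g i‖ := fun i => norm_norm (g i)
  exact ⟨h, fun i => rfl, le_antisymm (lp.norm_mono two_ne_zero fun i => (hcoeff i).le)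
    (lp.norm_mono two_ne_zero fun i => (hcoeff i).ge)⟩

-- If `u n ∈ majorants ψ (f n)` is very close to `g`, then `g + ∑ n, |u n - g|` majorizes every
-- `f n` at once and is still close to `g`.
theorem iInter_closure_majorants_subset (f : ℕ → X → ℝ≥0∞) :
    ⋂ n, closure (majorants ψ (f n)) ⊆ closure (majorants ψ (⨆ n, f n)) := by
  intro g hg
  refine Metric.mem_closure_iff.2 fun ε hε => ?_
  obtain ⟨δ, hδ, c, hδc, hcε⟩ := posSumOfEncodable (half_pos hε) ℕ
  choose u hu hdist using fun n => Metric.mem_closure_iff.1 (mem_iInter.1 hg n) (δ n) (hδ n)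
  choose v hv hnorm using fun n => exists_lp_eq_abs (u n - g)
  have hvδ : ∀ n, ‖v n‖ ≤ δ n := fun n => by
    rw [hnorm, ← dist_eq_norm, dist_comm]; exact (hdist n).le
  have hsummable : Summable v := .of_norm_bounded hδc.summable hvδ
  have hle : ∀ n i, u n i ≤ (g + ∑' n, v n) i := fun n i => by
    have hsum : HasSum (fun n => |u n i - g i|) ((∑' n, v n) i) := by
      have := hsummable.hasSum.mapL (lp.evalCLM ℝ (fun _ : I => ℝ) 2 i)
      exact this.congr_fun fun n => (hv n i).symm
    have : u n i - g i ≤ (∑' n, v n) i :=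
      (le_abs_self _).trans (le_hasSum hsum n fun _ _ => abs_nonneg _)
    rw [lp.coeFn_add, Pi.add_apply]
    linarith
  refine ⟨g + ∑' n, v n, ?_, ?_⟩
  · rw [majorants_iSup]
    exact mem_iInter.2 fun n => mem_majorants_of_le (hu n) (hle n)
  · rw [dist_self_add_right]
    exact (tsum_of_norm_bounded hδc hvδ).trans_lt (hcε.trans_lt (half_lt_self hε))

/-- The upper envelope `inf {‖g‖ | g ≥ 0, f ≤ potential ψ g}` of the `ℓ²` norm, infinite when `f`
has no majorant. It is the sublinear functional extending `capacity` from sets to functions. -/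
noncomputable def upperNorm (ψ : I → X → ℝ≥0) (f : X → ℝ≥0∞) : ℝ≥0∞ :=
  ⨅ g ∈ majorants ψ f, ‖g‖ₑ

theorem upperNorm_lt_iff {r : ℝ≥0∞} : upperNorm ψ f < r ↔ ∃ g ∈ majorants ψ f, ‖g‖ₑ < r := by
  simp only [upperNorm, iInf_lt_iff, exists_prop]

theorem upperNorm_le_of_mem_closure (hg : g ∈ closure (majorants ψ f)) :
    upperNorm ψ f ≤ ‖g‖ₑ := by
  have hdist : upperNorm ψ f = infEDist 0 (majorants ψ f) := by
    simp only [upperNorm, infEDist, edist_zero_left, enorm_eq_nnnorm]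
  rw [hdist, ← infEDist_closure, enorm_eq_nnnorm, ← edist_zero_left]
  exact infEDist_le_edist_of_mem hg

theorem upperNorm_le (hg : g ∈ majorants ψ f) : upperNorm ψ f ≤ ‖g‖ₑ :=
  iInf₂_le g hg

theorem upperNorm_mono (ψ : I → X → ℝ≥0) : Monotone (upperNorm ψ) := fun _ _ hf =>
  biInf_mono (majorants_anti hf)

theorem upperNorm_zero (ψ : I → X → ℝ≥0) : upperNorm ψ 0 = 0 :=
  nonpos_iff_eq_zero.1 <| (upperNorm_le ⟨fun _ => le_rfl, zero_le⟩).trans_eq enorm_zero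

theorem upperNorm_add_le (f₁ f₂ : X → ℝ≥0∞) :
    upperNorm ψ (f₁ + f₂) ≤ upperNorm ψ f₁ + upperNorm ψ f₂ := by
  simp only [upperNorm, ENNReal.iInf_add, ENNReal.add_iInf]
  exact le_iInf₂ fun h hh => le_iInf₂ fun g hg =>
    (iInf₂_le (g + h) (add_mem_majorants hg hh)).trans (enorm_add_le g h)

theorem upperNorm_smul_le {c : ℝ} (hc : 0 < c) (f : X → ℝ≥0∞) :
    upperNorm ψ (ENNReal.ofReal c • f) ≤ ENNReal.ofReal c * upperNorm ψ f := by
  have hc0 : ENNReal.ofReal c ≠ 0 := (ENNReal.ofReal_pos.2 hc).ne'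
  simp only [upperNorm, ENNReal.mul_iInf_of_ne hc0 ENNReal.ofReal_ne_top]
  refine le_iInf₂ fun g hg => (iInf₂_le (c • g) (smul_mem_majorants hc.le hg)).trans_eq ?_
  rw [enorm_smul, Real.enorm_of_nonneg hc.le]

theorem upperNorm_iSup_of_monotone {f : ℕ → X → ℝ≥0∞} (hf : Monotone f) :
    upperNorm ψ (⨆ n, f n) = ⨆ n, upperNorm ψ (f n) := by
  refine le_antisymm ?_ (iSup_le fun n => upperNorm_mono ψ (le_iSup f n))
  refine ENNReal.le_of_forall_pos_le_add fun ε hε htop => ?_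
  obtain ⟨g, hg, hgnorm⟩ := exists_mem_iInter_norm_le_of_antitone_convex
    (C := fun n => closure (majorants ψ (f n)))
    (fun m n hmn => closure_mono (majorants_anti (hf hmn)))
    (fun n => (convex_majorants ψ (f n)).closure) (fun n => isClosed_closure)
    (L := ((⨆ n, upperNorm ψ (f n)) + ε).toReal) fun n => by
      obtain ⟨g, hg, hlt⟩ := upperNorm_lt_iff.1 <|
        (le_iSup (fun n => upperNorm ψ (f n)) n).trans_lt
          (ENNReal.lt_add_right htop.ne (ENNReal.coe_pos.2 hε).ne')
      refine ⟨g, subset_closure hg, ?_⟩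
      rw [← toReal_enorm]
      exact ENNReal.toReal_mono (by finiteness) hlt.le
  calc upperNorm ψ (⨆ n, f n) ≤ ‖g‖ₑ :=
        upperNorm_le_of_mem_closure (iInter_closure_majorants_subset f hg)
    _ = ENNReal.ofReal ‖g‖ := (ofReal_norm g).symm
    _ ≤ (⨆ n, upperNorm ψ (f n)) + ε := ENNReal.ofReal_le_of_le_toReal hgnorm

end Potential

section Capacitability

open scoped ENNReal

/-- A Choquet capacity, with outer regularity on compact sets in place of continuity along
decreasing sequences of compact sets. -/
structure IsChoquetCapacity {X : Type*} [TopologicalSpace X] (c : Set X → ℝ≥0∞) : Prop where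
  mono : Monotone c
  iUnion : ∀ s : ℕ → Set X, Monotone s → c (⋃ n, s n) = ⨆ n, c (s n)
  exists_isOpen_lt : ∀ K, IsCompact K → ∀ a, c K < a → ∃ U, K ⊆ U ∧ IsOpen U ∧ c U < a

theorem exists_forall_initial_box {P : Set (ℕ → ℕ) → Prop} (huniv : P univ)
    (hstep : ∀ k S, P S → ∃ m, P (S ∩ {σ | σ k ≤ m})) :
    ∃ n : ℕ → ℕ, ∀ k, P {σ | ∀ i < k, σ i ≤ n i} := by
  choose! m hm using hstep
  let S : ℕ → Set (ℕ → ℕ) := fun k => Nat.rec univ (fun k S => S ∩ {σ | σ k ≤ m k S}) k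
  have hS : ∀ k, S k = {σ | ∀ i < k, σ i ≤ m i (S i)} := fun k => by
    induction k with
    | zero => exact (eq_univ_of_forall fun σ i hi => absurd hi i.not_lt_zero).symm
    | succ k ih =>
      change S k ∩ {σ | σ k ≤ m k (S k)} = _
      nth_rw 1 [ih]
      ext σ
      exact (Nat.forall_lt_succ_right (p := fun i => σ i ≤ m i (S i))).symm
  refine ⟨fun i => m i (S i), fun k => hS k ▸ ?_⟩
  induction k with
  | zero => exact huniv
  | succ k ih => exact hm k (S k) ih

theorem exists_initial_box_subset {n : ℕ → ℕ} {V : Set (ℕ → ℕ)} (hV : IsOpen V)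
    (hn : Iic n ⊆ V) : ∃ k, {σ : ℕ → ℕ | ∀ i < k, σ i ≤ n i} ⊆ V := by
  have hcompact : IsCompact (Iic n) := Icc_bot (a := n) ▸ isCompact_Icc
  let U : ℕ → Set (ℕ → ℕ) := fun k => {τ | PiNat.cylinder τ k ⊆ V}
  have hopen : ∀ k, IsOpen (U k) := fun k => isOpen_iff_mem_nhds.2 fun τ hτ => by
    filter_upwards [(PiNat.isOpen_cylinder _ τ k).mem_nhds (PiNat.self_mem_cylinder τ k)] with ρ hρ
    rwa [mem_ofPred_eq, PiNat.mem_cylinder_iff_eq.1 hρ]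
  have hcover : Iic n ⊆ ⋃ k, U k := fun τ hτ => by
    obtain ⟨_, ⟨ρ, k, rfl⟩, hτρ, hsub⟩ :=
      (PiNat.isTopologicalBasis_cylinders fun _ : ℕ => ℕ).exists_subset_of_mem_open (hn hτ) hV
    exact mem_iUnion.2 ⟨k, (PiNat.mem_cylinder_iff_eq.1 hτρ).trans_subset hsub⟩
  have hmono : Monotone U := fun k l hkl τ hτ => (PiNat.cylinder_anti τ hkl).trans hτ
  obtain ⟨k, hk⟩ := hcompact.elim_directed_cover U hopen hcover hmono.directed_le
  refine ⟨k, fun σ hσ => hk (inf_le_right : σ ⊓ n ≤ n) ?_⟩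
  exact PiNat.mem_cylinder_iff.2 fun i hi => (inf_eq_left.2 (hσ i hi)).symm

/-- **Choquet's capacitability theorem.** -/
theorem IsChoquetCapacity.exists_isCompact_lt {X : Type*} [TopologicalSpace X]
    {c : Set X → ℝ≥0∞} (hc : IsChoquetCapacity c) {E : Set X} (hE : AnalyticSet E) {a : ℝ≥0∞}
    (ha : a < c E) : ∃ K ⊆ E, IsCompact K ∧ a < c K := by
  obtain ⟨b, hab, hb⟩ := exists_between ha
  rw [AnalyticSet] at hE
  obtain rfl | ⟨f, hf, rfl⟩ := hE
  · exact ⟨∅, Subset.rfl, isCompact_empty, ha⟩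
  obtain ⟨n, hn⟩ := exists_forall_initial_box (P := fun S => b < c (f '' S))
    (by rwa [image_univ]) fun k S hS => by
      have hunion : ⋃ m, f '' (S ∩ {σ | σ k ≤ m}) = f '' S := by
        rw [← image_iUnion, ← inter_iUnion,
          iUnion_eq_univ_iff.2 fun σ : ℕ → ℕ => ⟨σ k, le_refl (σ k)⟩, inter_univ]
      have hmono : Monotone fun m => f '' (S ∩ {σ | σ k ≤ m}) := fun m m' hm =>
        image_mono <| inter_subset_inter_right _ fun σ (hσ : σ k ≤ m) => hσ.trans hm
      rw [← hunion, hc.iUnion _ hmono] at hS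
      exact lt_iSup_iff.1 hS
  have hK : IsCompact (f '' Iic n) := (Icc_bot (a := n) ▸ isCompact_Icc).image hf
  refine ⟨f '' Iic n, image_subset_range _ _, hK, hab.trans_le (le_of_not_gt fun hlt => ?_)⟩
  obtain ⟨U, hKU, hU, hcU⟩ := hc.exists_isOpen_lt _ hK b hlt
  obtain ⟨k, hk⟩ := exists_initial_box_subset (hU.preimage hf) (image_subset_iff.1 hKU)
  exact ((hn k).trans_le (hc.mono (image_subset_iff.2 hk))).not_gt hcU

end Capacitability

section Capacity

open scoped ENNReal NNReal

variable {X I : Type*} {ψ : I → X → ℝ≥0} {A B : Set X}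

/-- The `ℓ²` capacity of a set with respect to the kernel `ψ`: the least norm of a square-summable
family of coefficients whose potential is at least `1` on the set. -/
noncomputable def capacity (ψ : I → X → ℝ≥0) (A : Set X) : ℝ≥0∞ :=
  upperNorm ψ (A.indicator 1)

theorem mem_majorants_indicator_one_iff {g : lp (fun _ : I => ℝ) 2} :
    g ∈ majorants ψ (A.indicator 1) ↔ (∀ i, 0 ≤ g i) ∧ ∀ x ∈ A, 1 ≤ potential ψ g x := by
  refine and_congr_right' ⟨fun h x hx => ?_, fun h => indicator_le' h fun _ _ => zero_le⟩
  simpa only [indicator_of_mem hx, Pi.one_apply] using h x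

theorem capacity_mono (ψ : I → X → ℝ≥0) : Monotone (capacity ψ) := fun _ _ h =>
  upperNorm_mono ψ (indicator_le_indicator_of_subset h fun _ => zero_le)

theorem capacity_empty (ψ : I → X → ℝ≥0) : capacity ψ ∅ = 0 := by
  rw [capacity, indicator_empty', upperNorm_zero]

theorem capacity_union_le (A B : Set X) : capacity ψ (A ∪ B) ≤ capacity ψ A + capacity ψ B := by
  refine (upperNorm_mono ψ ?_).trans (upperNorm_add_le _ _)
  rw [← indicator_union_add_inter]
  exact le_self_add

theorem capacity_iUnion_of_monotone {A : ℕ → Set X} (hA : Monotone A) :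
    capacity ψ (⋃ n, A n) = ⨆ n, capacity ψ (A n) := by
  have hind : (⋃ n, A n).indicator (1 : X → ℝ≥0∞) = ⨆ n, (A n).indicator 1 := by
    funext x
    rw [indicator_iUnion_apply bot_eq_zero, iSup_apply]
  rw [capacity, hind, upperNorm_iSup_of_monotone fun m n h =>
    indicator_le_indicator_of_subset (hA h) fun _ => zero_le]
  rfl

theorem exists_isOpen_capacity_lt [TopologicalSpace X] (hψ : ∀ i, Continuous (ψ i))
    {a : ℝ≥0∞} (ha : capacity ψ A < a) : ∃ U, A ⊆ U ∧ IsOpen U ∧ capacity ψ U < a := by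
  obtain ⟨g, hg, hga⟩ := upperNorm_lt_iff.1 ha
  rw [mem_majorants_indicator_one_iff] at hg
  have hcont : Continuous fun c : ℝ => ENNReal.ofReal c * ‖g‖ₑ :=
    (ENNReal.continuous_mul_const enorm_ne_top).comp ENNReal.continuous_ofReal
  obtain ⟨c, hca, hc⟩ := (((hcont.tendsto 1).eventually_lt_const (by simpa)).filter_mono
    nhdsWithin_le_nhds |>.and (self_mem_nhdsWithin (s := Ioi (1 : ℝ)))).exists
  have hc0 : 0 ≤ c := zero_le_one.trans (le_of_lt hc)
  refine ⟨{x | 1 < potential ψ (c • g) x}, fun x hx => ?_,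
    (lowerSemicontinuous_potential hψ _).isOpen_preimage 1, ?_⟩
  · rw [mem_ofPred_eq, potential_smul hc0]
    exact (ENNReal.one_lt_ofReal.2 hc).trans_le (le_mul_of_one_le_right' (hg.2 x hx))
  · have hmem : c • g ∈ majorants ψ ({x | 1 < potential ψ (c • g) x}.indicator 1) :=
      mem_majorants_indicator_one_iff.2 ⟨fun i => mul_nonneg hc0 (hg.1 i), fun x hx => hx.le⟩
    refine (upperNorm_le hmem).trans_lt ?_
    rwa [enorm_smul, Real.enorm_of_nonneg hc0]

theorem isChoquetCapacity_capacity [TopologicalSpace X] (hψ : ∀ i, Continuous (ψ i)) :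
    IsChoquetCapacity (capacity ψ) where
  mono := capacity_mono ψ
  iUnion _ := capacity_iUnion_of_monotone
  exists_isOpen_lt _ _ _ := exists_isOpen_capacity_lt hψ

theorem capacity_ne_top_of_forall_le {i : I} {ε : ℝ≥0} (hε : 0 < ε) (hA : ∀ x ∈ A, ε ≤ ψ i x) :
    capacity ψ A ≠ ⊤ := by
  classical
  refine ne_top_of_le_ne_top enorm_ne_top <|
    upperNorm_le (sum_single_mem_majorants (F := {i}) (b := fun _ => ε⁻¹) ?_)
  refine indicator_le' (fun x hx => ?_) fun _ _ => zero_le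
  rw [Finset.sum_singleton, ← ENNReal.coe_mul, Pi.one_apply, ENNReal.one_le_coe_iff,
    ← inv_mul_cancel₀ hε.ne']
  gcongr
  exact hA x hx

theorem capacity_ne_top_of_isCompact [TopologicalSpace X] (hψ : ∀ i, Continuous (ψ i))
    {K : Set X} (hK : IsCompact K) (hpos : ∀ x ∈ K, ∃ i, 0 < ψ i x) : capacity ψ K ≠ ⊤ := by
  refine hK.induction_on (p := fun A => capacity ψ A ≠ ⊤)
    (by rw [capacity_empty]; exact ENNReal.zero_ne_top)
    (fun A B hAB hB => ne_top_of_le_ne_top hB (capacity_mono ψ hAB))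
    (fun A B hA hB => ne_top_of_le_ne_top (ENNReal.add_ne_top.2 ⟨hA, hB⟩) (capacity_union_le A B))
    fun x hx => ?_
  obtain ⟨i, hi⟩ := hpos x hx
  obtain ⟨ε, hε, hεi⟩ := exists_between hi
  exact ⟨{y | ε < ψ i y}, mem_nhdsWithin_of_mem_nhds ((hψ i).tendsto x |>.eventually_const_lt hεi),
    capacity_ne_top_of_forall_le hε fun y hy => hy.le⟩

end Capacity

section Duality

open scoped ENNReal NNReal

theorem exists_linearMap_le_sublinear_apply_eq {V : Type*} [AddCommGroup V] [Module ℝ V]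
    {p : V → ℝ} (hsmul : ∀ c : ℝ, 0 < c → ∀ v, p (c • v) = c * p v)
    (hadd : ∀ v w, p (v + w) ≤ p v + p w) (v : V) :
    ∃ l : V →ₗ[ℝ] ℝ, l v = p v ∧ ∀ w, l w ≤ p w := by
  have hp0 : p 0 = 0 := by
    have := hsmul 2 two_pos 0
    rw [smul_zero] at this
    linarith
  have hle : ∀ c : ℝ, c * p v ≤ p (c • v) := fun c => by
    rcases lt_trichotomy c 0 with hc | rfl | hc
    · have := hadd (c • v) (-c • v)
      rw [← add_smul, add_neg_cancel, zero_smul, hp0, hsmul (-c) (neg_pos.2 hc)] at this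
      linarith
    · rw [zero_mul, zero_smul, hp0]
    · exact (hsmul c hc v).ge
  have hspan : ∀ c : ℝ, c • v = 0 → c • p v = 0 := fun c hc => by
    rcases smul_eq_zero.1 hc with rfl | rfl
    · exact zero_smul ℝ _
    · rw [hp0, smul_zero]
  obtain ⟨l, hl, hlp⟩ := exists_extension_of_le_sublinear
    (LinearPMap.mkSpanSingleton' (σ := RingHom.id ℝ) v (p v) hspan) p hsmul hadd <| by
      rintro ⟨w, hw⟩
      obtain ⟨c, rfl⟩ := Submodule.mem_span_singleton.1 hw
      rw [LinearPMap.mkSpanSingleton'_apply]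
      exact hle c
  refine ⟨l, ?_, hlp⟩
  have hv := Submodule.mem_span_singleton_self (R := ℝ) v
  exact (hl ⟨v, hv⟩).trans (LinearPMap.mkSpanSingleton'_apply_self v (p v) hspan hv)

theorem exists_measure_integral_eq_of_nonneg {K : Type*} [TopologicalSpace K] [CompactSpace K]
    [T2Space K] [MeasurableSpace K] [BorelSpace K] (l : C(K, ℝ) →ₗ[ℝ] ℝ)
    (hl : ∀ f, 0 ≤ f → 0 ≤ l f) :
    ∃ μ : Measure K, IsFiniteMeasure μ ∧ ∀ f : C(K, ℝ), ∫ x, f x ∂μ = l f := by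
  let toContinuousMap : CompactlySupportedContinuousMap K ℝ →ₗ[ℝ] C(K, ℝ) :=
    { toFun := fun f => f.toContinuousMap
      map_add' := fun _ _ => rfl
      map_smul' := fun _ _ => rfl }
  let Λ := PositiveLinearMap.mk₀ (l ∘ₗ toContinuousMap) fun f hf => hl _ hf
  exact ⟨RealRMK.rieszMeasure Λ, inferInstance, fun f =>
    RealRMK.integral_rieszMeasure Λ (CompactlySupportedContinuousMap.continuousMapEquiv f)⟩

variable {K I : Type*} {ψ : I → K → ℝ≥0}

theorem upperNorm_smul {c : ℝ} (hc : 0 < c) (f : K → ℝ≥0∞) :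
    upperNorm ψ (ENNReal.ofReal c • f) = ENNReal.ofReal c * upperNorm ψ f := by
  have hinv : ENNReal.ofReal c * ENNReal.ofReal c⁻¹ = 1 := by
    rw [← ENNReal.ofReal_mul hc.le, mul_inv_cancel₀ hc.ne', ENNReal.ofReal_one]
  refine le_antisymm (upperNorm_smul_le hc f) ?_
  calc ENNReal.ofReal c * upperNorm ψ f
      = ENNReal.ofReal c * upperNorm ψ (ENNReal.ofReal c⁻¹ • ENNReal.ofReal c • f) := by
        rw [smul_smul, mul_comm (ENNReal.ofReal c⁻¹), hinv, one_smul]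
    _ ≤ ENNReal.ofReal c * (ENNReal.ofReal c⁻¹ * upperNorm ψ (ENNReal.ofReal c • f)) := by
        gcongr
        exact upperNorm_smul_le (inv_pos.2 hc) _
    _ = upperNorm ψ (ENNReal.ofReal c • f) := by rw [← mul_assoc, hinv, one_mul]

theorem upperNorm_ofReal_ne_top [TopologicalSpace K] [CompactSpace K] (hfin : capacity ψ univ ≠ ⊤)
    (f : C(K, ℝ)) : upperNorm ψ (fun x => ENNReal.ofReal (f x)) ≠ ⊤ := by
  have hle : (fun x => ENNReal.ofReal (f x)) ≤ ENNReal.ofReal (‖f‖ + 1) • univ.indicator 1 :=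
    fun x => by
      rw [indicator_univ, Pi.smul_apply, Pi.one_apply, smul_eq_mul, mul_one]
      exact ENNReal.ofReal_le_ofReal
        ((le_abs_self _).trans ((f.norm_coe_le_norm x).trans (by simp)))
  refine ne_top_of_le_ne_top ?_
    ((upperNorm_mono ψ hle).trans (upperNorm_smul_le (by positivity) _))
  exact ENNReal.mul_ne_top ENNReal.ofReal_ne_top hfin

theorem exists_linearMap_le_upperNorm [TopologicalSpace K] [CompactSpace K]
    (hfin : capacity ψ univ ≠ ⊤) :
    ∃ l : C(K, ℝ) →ₗ[ℝ] ℝ, l 1 = (capacity ψ univ).toReal ∧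
      ∀ f : C(K, ℝ), l f ≤ (upperNorm ψ fun x => ENNReal.ofReal (f x)).toReal := by
  let p : C(K, ℝ) → ℝ := fun f => (upperNorm ψ fun x => ENNReal.ofReal (f x)).toReal
  have hsmul : ∀ c : ℝ, 0 < c → ∀ f, p (c • f) = c * p f := fun c hc f => by
    have heq : (fun x => ENNReal.ofReal ((c • f) x)) =
        ENNReal.ofReal c • fun x => ENNReal.ofReal (f x) :=
      funext fun x => ENNReal.ofReal_mul hc.le
    simp only [p, heq, upperNorm_smul hc, ENNReal.toReal_mul, ENNReal.toReal_ofReal hc.le]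
  have hadd : ∀ f g, p (f + g) ≤ p f + p g := fun f g => by
    have hle : (fun x => ENNReal.ofReal ((f + g) x)) ≤
        (fun x => ENNReal.ofReal (f x)) + fun x => ENNReal.ofReal (g x) := fun x =>
      ENNReal.ofReal_add_le
    have hf := upperNorm_ofReal_ne_top hfin f
    have hg := upperNorm_ofReal_ne_top hfin g
    rw [← ENNReal.toReal_add hf hg]
    exact ENNReal.toReal_mono (ENNReal.add_ne_top.2 ⟨hf, hg⟩)
      ((upperNorm_mono ψ hle).trans (upperNorm_add_le _ _))
  obtain ⟨l, hl1, hl⟩ := exists_linearMap_le_sublinear_apply_eq hsmul hadd 1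
  refine ⟨l, hl1.trans ?_, hl⟩
  rw [capacity, indicator_univ]
  simp only [p, ContinuousMap.one_apply, ENNReal.ofReal_one]
  rfl

theorem exists_measure_lintegral_le_upperNorm [TopologicalSpace K] [CompactSpace K] [T2Space K]
    [MeasurableSpace K] [BorelSpace K] (hfin : capacity ψ univ ≠ ⊤) :
    ∃ μ : Measure K, μ univ = capacity ψ univ ∧
      ∀ f : C(K, ℝ≥0), ∫⁻ x, f x ∂μ ≤ upperNorm ψ fun x => f x := by
  obtain ⟨l, hl1, hl⟩ := exists_linearMap_le_upperNorm hfin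
  obtain ⟨μ, _, hμ⟩ := exists_measure_integral_eq_of_nonneg l fun f hf => by
    have hneg : (fun x => ENNReal.ofReal ((-f) x)) = 0 :=
      funext fun x => ENNReal.ofReal_of_nonpos (neg_nonpos.2 (hf x))
    have := hl (-f)
    rw [hneg, upperNorm_zero, ENNReal.toReal_zero, map_neg] at this
    linarith
  refine ⟨μ, ?_, fun f => ?_⟩
  · have := hμ 1
    simp only [ContinuousMap.one_apply, integral_const, smul_eq_mul, mul_one, hl1] at this
    exact (ENNReal.toReal_eq_toReal_iff' (measure_ne_top μ univ) hfin).1 this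
  · let f' : C(K, ℝ) := ⟨fun x => f x, by fun_prop⟩
    have hint : Integrable f' μ :=
      f'.continuous.integrable_of_hasCompactSupport (.of_compactSpace f')
    have heq : ∀ x, ENNReal.ofReal (f' x) = f x := fun x => ENNReal.ofReal_coe_nnreal
    calc ∫⁻ x, f x ∂μ = ENNReal.ofReal (∫ x, f' x ∂μ) := by
          rw [ofReal_integral_eq_lintegral_ofReal hint (.of_forall fun x => (f x).coe_nonneg)]
          simp only [heq]
      _ ≤ upperNorm ψ fun x => f x := by
          rw [hμ]
          simpa only [heq] using ENNReal.ofReal_le_of_le_toReal (hl f')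

/-- The energy of a measure with respect to the kernel `ψ`, that is, the squared `ℓ²` norm of the
family of integrals of the `ψ i`. -/
noncomputable def energy [MeasurableSpace K] (ψ : I → K → ℝ≥0) (μ : Measure K) : ℝ≥0∞ :=
  ∑' i, (∫⁻ x, ψ i x ∂μ) ^ 2

theorem energy_smul [MeasurableSpace K] (c : ℝ≥0∞) (μ : Measure K) :
    energy ψ (c • μ) = c ^ 2 * energy ψ μ := by
  simp only [energy, lintegral_smul_measure, smul_eq_mul, mul_pow, ENNReal.tsum_mul_left]

theorem energy_map [MeasurableSpace K] {X : Type*} [MeasurableSpace X] {φ : I → X → ℝ≥0}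
    (hφ : ∀ i, Measurable (φ i)) {u : K → X} (hu : Measurable u) (μ : Measure K) :
    energy φ (μ.map u) = energy (fun i x => φ i (u x)) μ := by
  simp only [energy, lintegral_map (hφ _).coe_nnreal_ennreal hu]

theorem sum_mul_lintegral_le_enorm_sum_single [DecidableEq I] [TopologicalSpace K]
    [MeasurableSpace K] [BorelSpace K] (hψ : ∀ i, Continuous (ψ i)) {μ : Measure K}
    (hμ : ∀ f : C(K, ℝ≥0), ∫⁻ x, f x ∂μ ≤ upperNorm ψ fun x => f x) (F : Finset I) (b : I → ℝ≥0) :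
    ∑ i ∈ F, (b i : ℝ≥0∞) * ∫⁻ x, ψ i x ∂μ ≤ ‖∑ i ∈ F, lp.single 2 i (b i : ℝ)‖ₑ := by
  let f : C(K, ℝ≥0) := ⟨fun x => ∑ i ∈ F, b i * ψ i x, by fun_prop⟩
  have hf : ∀ x, (f x : ℝ≥0∞) = ∑ i ∈ F, (b i : ℝ≥0∞) * ψ i x := fun x => by
    simp only [f, ContinuousMap.coe_mk, ENNReal.ofNNReal_finsetSum, ENNReal.coe_mul]
  calc ∑ i ∈ F, (b i : ℝ≥0∞) * ∫⁻ x, ψ i x ∂μ = ∫⁻ x, f x ∂μ := by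
        simp only [hf]
        rw [lintegral_finsetSum _ fun i _ => by fun_prop]
        simp only [lintegral_const_mul' _ _ ENNReal.coe_ne_top]
    _ ≤ upperNorm ψ fun x => f x := hμ f
    _ ≤ _ := upperNorm_le (sum_single_mem_majorants fun x => (hf x).le)

theorem energy_le_one_of_lintegral_le_upperNorm [TopologicalSpace K] [MeasurableSpace K]
    [BorelSpace K] (hψ : ∀ i, Continuous (ψ i)) {μ : Measure K}
    (hμ : ∀ f : C(K, ℝ≥0), ∫⁻ x, f x ∂μ ≤ upperNorm ψ fun x => f x) : energy ψ μ ≤ 1 := by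
  classical
  have hbound := sum_mul_lintegral_le_enorm_sum_single hψ hμ
  have hfin : ∀ i, ∫⁻ x, ψ i x ∂μ ≠ ⊤ := fun i => by
    have := hbound {i} 1
    rw [Finset.sum_singleton, Pi.one_apply, ENNReal.coe_one, one_mul] at this
    exact ne_top_of_le_ne_top enorm_ne_top this
  let b : I → ℝ≥0 := fun i => (∫⁻ x, ψ i x ∂μ).toNNReal
  have hb : ∀ i, ∫⁻ x, ψ i x ∂μ = b i := fun i => (ENNReal.coe_toNNReal (hfin i)).symm
  rw [energy, ENNReal.tsum_eq_iSup_sum]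
  refine iSup_le fun F => ?_
  let N : ℝ≥0 := ‖∑ i ∈ F, (lp.single 2 i (b i : ℝ) : lp (fun _ : I => ℝ) 2)‖₊
  have hN : ∑ i ∈ F, b i ^ 2 = N ^ 2 := by
    have := lp.norm_sum_single (E := fun _ : I => ℝ) (p := 2) (by norm_num) (fun i => (b i : ℝ)) F
    refine NNReal.coe_injective ?_
    simpa [N] using this.symm
  have hNN : N ^ 2 ≤ N := by
    rw [← hN, ← ENNReal.coe_le_coe, ENNReal.ofNNReal_finsetSum]
    refine le_trans (le_of_eq ?_) (hbound F b)
    simp only [hb, sq, ENNReal.coe_mul]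
  have hN1 : N ≤ 1 := le_of_not_gt fun h => hNN.not_gt (lt_self_pow₀ h one_lt_two)
  simp only [hb]
  exact_mod_cast hN.trans_le (hNN.trans hN1)

theorem exists_measure_energy_le_one [TopologicalSpace K] [CompactSpace K] [T2Space K]
    [MeasurableSpace K] [BorelSpace K] (hψ : ∀ i, Continuous (ψ i)) (hfin : capacity ψ univ ≠ ⊤) :
    ∃ μ : Measure K, μ univ = capacity ψ univ ∧ energy ψ μ ≤ 1 :=
  let ⟨μ, hμ, hle⟩ := exists_measure_lintegral_le_upperNorm hfin
  ⟨μ, hμ, energy_le_one_of_lintegral_le_upperNorm hψ hle⟩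

theorem capacity_univ_subtype {X : Type*} (φ : I → X → ℝ≥0) (K : Set X) :
    capacity (fun i (x : K) => φ i x) univ = capacity φ K := by
  have : majorants (fun i (x : K) => φ i x) (univ.indicator 1) =
      majorants φ (K.indicator 1) := by
    ext g
    simp only [mem_majorants_indicator_one_iff, mem_univ, forall_const, Subtype.forall]
    rfl
  rw [capacity, upperNorm, this, capacity, upperNorm]

theorem exists_isProbabilityMeasure_energy_lt_top {X : Type*} [TopologicalSpace X] [T2Space X]
    [MeasurableSpace X] [BorelSpace X] {φ : I → X → ℝ≥0} (hφ : ∀ i, Continuous (φ i))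
    (hpos : ∀ x, ∃ i, 0 < φ i x) {E : Set X} (hE : AnalyticSet E) (hcap : 0 < capacity φ E) :
    ∃ μ : Measure X, IsProbabilityMeasure μ ∧ μ E = 1 ∧ energy φ μ < ⊤ := by
  obtain ⟨K, hKE, hK, hcapK⟩ := (isChoquetCapacity_capacity hφ).exists_isCompact_lt hE hcap
  have : CompactSpace K := isCompact_iff_compactSpace.1 hK
  have hfin := capacity_ne_top_of_isCompact hφ hK fun x _ => hpos x
  rw [← capacity_univ_subtype φ K] at hcapK hfin
  obtain ⟨μ, hμ, henergy⟩ := exists_measure_energy_le_one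
    (fun i => (hφ i).comp continuous_subtype_val) hfin
  rw [← show μ univ = capacity (fun i (x : K) => φ i x) univ from hμ] at hcapK hfin
  have hval : Measurable ((↑) : K → X) := measurable_subtype_coe
  have hmap : ∀ A, MeasurableSet A → ((μ univ)⁻¹ • μ.map ((↑) : K → X)) A =
      (μ univ)⁻¹ * μ ((↑) ⁻¹' A) := fun A hA => by
    rw [Measure.smul_apply, Measure.map_apply hval hA, smul_eq_mul]
  have hone : (μ univ)⁻¹ * μ univ = 1 := ENNReal.inv_mul_cancel hcapK.ne' hfin
  have hprob : IsProbabilityMeasure ((μ univ)⁻¹ • μ.map ((↑) : K → X)) :=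
    ⟨by rw [hmap univ .univ, preimage_univ, hone]⟩
  refine ⟨(μ univ)⁻¹ • μ.map (↑), hprob, le_antisymm prob_le_one ?_, ?_⟩
  · calc 1 = (μ univ)⁻¹ * μ ((↑) ⁻¹' K) := by rw [Subtype.coe_preimage_self, hone]
      _ = ((μ univ)⁻¹ • μ.map ((↑) : K → X)) K := (hmap K hK.measurableSet).symm
      _ ≤ ((μ univ)⁻¹ • μ.map ((↑) : K → X)) E := measure_mono hKE
  · rw [energy_smul, energy_map (fun i => (hφ i).measurable) hval]
    exact ENNReal.mul_lt_top (ENNReal.pow_lt_top (ENNReal.inv_lt_top.2 hcapK))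
      (henergy.trans_lt ENNReal.one_lt_top)

end Duality

section DyadicNets

open scoped ENNReal NNReal

variable {X : Type*}

theorem lt_dist_of_isSeparated [PseudoMetricSpace X] {ε : ℝ≥0} {N : Set X} (hN : IsSeparated ε N)
    {x y : X} (hx : x ∈ N) (hy : y ∈ N) (hxy : x ≠ y) : (ε : ℝ) < dist x y := by
  have : (ε : ℝ≥0∞) < edist x y := hN hx hy hxy
  rwa [edist_nndist, ENNReal.coe_lt_coe, ← NNReal.coe_lt_coe, coe_nndist] at this

/-- The doubling property at all scales at most `1`: separated subsets of a ball of twice the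
separation radius have uniformly bounded cardinality. -/
def UniformlyLocallyDoubling (X : Type*) [PseudoMetricSpace X] : Prop :=
  ∃ M : ℕ, ∀ r : ℝ≥0, 0 < r → r ≤ 1 → ∀ x : X, packingNumber r (closedBall x (2 * r)) ≤ M

theorem card_le_multiplicity_of_isSeparated {V : Type*} [NormedAddCommGroup V] [NormedSpace ℝ V]
    [FiniteDimensional ℝ V] {r : ℝ≥0} (hr : 0 < r) {x : V} {F : Finset V}
    (hF : (F : Set V) ⊆ closedBall x (2 * r)) (hsep : IsSeparated r (F : Set V)) :
    F.card ≤ Besicovitch.multiplicity V := by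
  classical
  have hr' : (0 : ℝ) < r := hr
  let rescale : V → V := fun z => (r : ℝ)⁻¹ • (z - x)
  have hnorm : ∀ v : V, ‖(r : ℝ)⁻¹ • v‖ = ‖v‖ / r := fun v => by
    rw [norm_smul, norm_inv, Real.norm_of_nonneg hr'.le, inv_mul_eq_div]
  have hinj : Function.Injective rescale :=
    (smul_right_injective V (inv_ne_zero hr'.ne')).comp sub_left_injective
  rw [← Finset.card_image_of_injective F hinj]
  refine Besicovitch.card_le_multiplicity (Finset.forall_mem_image.2 fun z hz => ?_)
    (Finset.forall_mem_image.2 fun z hz => Finset.forall_mem_image.2 fun w hw hne => ?_)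
  · rw [hnorm, div_le_iff₀ hr', ← dist_eq_norm]
    exact hF hz
  · rw [← smul_sub, sub_sub_sub_cancel_right, hnorm, one_le_div₀ hr', ← dist_eq_norm]
    exact (lt_dist_of_isSeparated hsep hz hw (ne_of_apply_ne rescale hne)).le

theorem uniformlyLocallyDoubling_of_finiteDimensional (V : Type*) [NormedAddCommGroup V]
    [NormedSpace ℝ V] [FiniteDimensional ℝ V] : UniformlyLocallyDoubling V := by
  refine ⟨Besicovitch.multiplicity V, fun r hr _ x => iSup₂_le fun C hC => iSup_le fun hsep => ?_⟩
  refine le_of_not_gt fun hlt => ?_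
  obtain ⟨F, hFC, hF⟩ := exists_subset_encard_eq (Order.add_one_le_of_lt hlt)
  lift F to Finset V using finite_of_encard_eq_coe hF
  have hcard := card_le_multiplicity_of_isSeparated hr (hFC.trans hC) (hsep.subset hFC)
  rw [encard_coe_eq_coe_finsetCard] at hF
  exact hcard.not_gt (Nat.lt_of_succ_le (by exact_mod_cast hF.ge))

theorem exists_maximal_isSeparated [PseudoEMetricSpace X] (ε : ℝ≥0∞) (A : Set X) :
    ∃ N, Maximal (fun N => N ⊆ A ∧ IsSeparated ε N) N := by
  refine zorn_subset {N | N ⊆ A ∧ IsSeparated ε N} fun c hc hchain =>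
    ⟨⋃₀ c, ⟨sUnion_subset fun N hN => (hc hN).1, ?_⟩, fun N hN => subset_sUnion_of_mem hN⟩
  exact (pairwise_sUnion hchain.directedOn).2 fun N hN => (hc hN).2

theorem countable_of_isSeparated [PseudoMetricSpace X] [SecondCountableTopology X] {ε : ℝ≥0}
    (hε : 0 < ε) {N : Set X} (hN : IsSeparated ε N) : N.Countable := by
  have : DiscreteTopology N := .of_forall_le_dist (NNReal.coe_pos.2 hε) fun x y hxy =>
    (lt_dist_of_isSeparated hN x.2 y.2 (Subtype.coe_ne_coe.2 hxy)).le
  exact countable_of_Lindelof_of_discrete (X := N)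

/-- Countable sets of centres, one for each dyadic radius `2⁻ᵏ`, such that the balls of radius `2⁻ᵏ`
cover the space while at most `M` balls of twice that radius contain any given point. -/
structure IsDyadicNet [PseudoMetricSpace X] (N : ℕ → Set X) (M : ℕ) : Prop where
  countable : ∀ k, (N k).Countable
  exists_dist_le : ∀ k x, ∃ z ∈ N k, dist x z ≤ 2⁻¹ ^ k
  encard_le : ∀ k x, (N k ∩ closedBall x (2 * 2⁻¹ ^ k)).encard ≤ M

theorem UniformlyLocallyDoubling.exists_isDyadicNet [PseudoMetricSpace X]
    [SecondCountableTopology X] (hX : UniformlyLocallyDoubling X) :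
    ∃ (N : ℕ → Set X) (M : ℕ), IsDyadicNet N M := by
  obtain ⟨M, hM⟩ := hX
  let r : ℕ → ℝ≥0 := fun k => 2⁻¹ ^ k
  have hr : ∀ k, (r k : ℝ) = 2⁻¹ ^ k := fun k => by push_cast [r]; rfl
  have hpos : ∀ k, 0 < r k := fun k => pow_pos (by norm_num) k
  choose N hN using fun k => exists_maximal_isSeparated (r k) (univ : Set X)
  refine ⟨N, M, fun k => countable_of_isSeparated (hpos k) (hN k).1.2, fun k x => ?_,
    fun k x => ?_⟩
  · have := isCover_iff_subset_iUnion_closedBall.1 (.of_maximal_isSeparated (hN k)) (mem_univ x)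
    simpa only [mem_iUnion₂, mem_closedBall, exists_prop, hr] using this
  · rw [← hr]
    exact (IsSeparated.encard_le_packingNumber inter_subset_right
      ((hN k).1.2.subset inter_subset_left)).trans
      (hM (r k) (hpos k) (pow_le_one₀ zero_le (by norm_num)) x)

end DyadicNets

section DyadicKernel

open scoped ENNReal NNReal Topology lp

theorem tsum_le_mul_of_encard_le {α : Type*} {S : Set α} {M : ℕ} (hS : S.encard ≤ M) {u : α → ℝ≥0∞}
    {B : ℝ≥0∞} (hu : ∀ a ∉ S, u a = 0) (huB : ∀ a ∈ S, u a ≤ B) : ∑' a, u a ≤ M * B := by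
  calc ∑' a, u a = ∑' a : S, u a :=
        (tsum_subtype_eq_of_support_subset fun a ha => not_imp_comm.1 (hu a) ha).symm
    _ ≤ ∑' _ : S, B := ENNReal.tsum_le_tsum fun a => huB a a.2
    _ = S.encard * B := ENNReal.tsum_set_const S B
    _ ≤ M * B := by gcongr; exact_mod_cast hS

theorem tsum_ofReal_sq_le_enorm_sq {I : Type*} (g : lp (fun _ : I => ℝ) 2) :
    ∑' i, ENNReal.ofReal (g i) ^ 2 ≤ ‖g‖ₑ ^ 2 := by
  have hsum : HasSum (fun i => ‖g i‖₊ ^ 2) (‖g‖₊ ^ 2) := by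
    have := lp.hasSum_norm (p := 2) (by norm_num) g
    exact NNReal.hasSum_coe.1 (by simpa using this)
  calc ∑' i, ENNReal.ofReal (g i) ^ 2 ≤ ∑' i, ((‖g i‖₊ ^ 2 : ℝ≥0) : ℝ≥0∞) :=
        ENNReal.tsum_le_tsum fun i => by
          rw [ENNReal.coe_pow]
          gcongr
          exact Real.ofReal_le_enorm (g i)
    _ = ‖g‖ₑ ^ 2 := by rw [← ENNReal.coe_tsum hsum.summable, hsum.tsum_eq, ENNReal.coe_pow]; rfl

theorem hausdorffMeasure_eq_zero_of_forall_exists_cover {X ι : Type*} [EMetricSpace X]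
    [MeasurableSpace X] [BorelSpace X] [Countable ι] {t : ℝ} (ht : 0 < t) {A : Set X}
    (h : ∀ ε : ℝ≥0, 0 < ε → ∃ T : ι → Set X, A ⊆ ⋃ i, T i ∧ ∑' i, ediam (T i) ^ t ≤ ε) :
    μH[t] A = 0 := by
  have hpos : ∀ n : ℕ, 0 < (2⁻¹ : ℝ≥0) ^ n := fun n => pow_pos (by norm_num) n
  choose T hAT hT using fun n : ℕ => h (2⁻¹ ^ n) (hpos n)
  have hlim : Tendsto (fun n : ℕ => ((2⁻¹ ^ n : ℝ≥0) : ℝ≥0∞)) atTop (𝓝 0) :=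
    ENNReal.tendsto_coe.2 (NNReal.tendsto_pow_atTop_nhds_zero_of_lt_one (by norm_num))
  have hradius : Tendsto (fun n : ℕ => ((2⁻¹ ^ n : ℝ≥0) : ℝ≥0∞) ^ t⁻¹) atTop (𝓝 0) := by
    have := hlim.ennrpow_const t⁻¹
    rwa [ENNReal.zero_rpow_of_pos (inv_pos.2 ht)] at this
  have hdiam : ∀ n i, ediam (T n i) ≤ ((2⁻¹ ^ n : ℝ≥0) : ℝ≥0∞) ^ t⁻¹ := fun n i =>
    (ENNReal.le_rpow_inv_iff ht).2 ((ENNReal.le_tsum i).trans (hT n))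
  refine nonpos_iff_eq_zero.1 ?_
  calc μH[t] A ≤ liminf (fun n => ∑' i, ediam (T n i) ^ t) atTop :=
        Measure.hausdorffMeasure_le_liminf_tsum t A _ hradius T (.of_forall hdiam) (.of_forall hAT)
    _ ≤ liminf (fun n : ℕ => ((2⁻¹ ^ n : ℝ≥0) : ℝ≥0∞)) atTop := liminf_le_liminf (.of_forall hT)
    _ = 0 := hlim.liminf_eq

variable {X : Type*} [PseudoMetricSpace X] {N : ℕ → Set X} {M : ℕ} {a b : ℝ≥0} {x : X}

/-- The kernel consisting, for each centre `z ∈ N k`, of `a ^ k` times a bump function at scale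
`2⁻ᵏ` around `z`. With `a = 2 ^ (s / 2)` the integrals of the kernel against a measure of finite
energy control the masses of its balls to the order `s`. -/
noncomputable def dyadicKernel (N : ℕ → Set X) (a : ℝ≥0) (i : Σ k, N k) (x : X) : ℝ≥0 :=
  a ^ i.1 * thickenedIndicator (show (0 : ℝ) < 2⁻¹ ^ i.1 / 2 by positivity)
    (closedBall (i.2 : X) (3 / 2 * 2⁻¹ ^ i.1)) x

theorem continuous_dyadicKernel (N : ℕ → Set X) (a : ℝ≥0) (i : Σ k, N k) :
    Continuous (dyadicKernel N a i) :=
  continuous_const.mul (BoundedContinuousFunction.continuous _)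

theorem dyadicKernel_le_pow (i : Σ k, N k) : dyadicKernel N a i x ≤ a ^ i.1 :=
  mul_le_of_le_one_right' (thickenedIndicator_le_one _ _ x)

theorem dyadicKernel_eq_pow {i : Σ k, N k} (hx : dist x i.2 ≤ 3 / 2 * 2⁻¹ ^ i.1) :
    dyadicKernel N a i x = a ^ i.1 := by
  rw [dyadicKernel, thickenedIndicator_one _ _ (mem_closedBall.2 hx), mul_one]

theorem dyadicKernel_eq_zero {i : Σ k, N k} (hx : x ∉ ball (i.2 : X) (2 * 2⁻¹ ^ i.1)) :
    dyadicKernel N a i x = 0 := by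
  rw [dyadicKernel, thickenedIndicator_zero _ _ fun hmem => hx ?_, mul_zero]
  obtain ⟨y, hy, hxy⟩ := mem_thickening_iff.1 hmem
  have := dist_triangle x y i.2
  rw [mem_closedBall] at hy
  rw [mem_ball]
  linarith

theorem ediam_ball_rpow_le {t : ℝ} (ht : 0 ≤ t) (hb : b ^ 2 = 2⁻¹ ^ t) (x : X) (k : ℕ) :
    ediam (ball x (2 * 2⁻¹ ^ k)) ^ t ≤ (4 : ℝ≥0∞) ^ t * (b ^ k) ^ 2 := by
  have hdiam : ediam (ball x (2 * 2⁻¹ ^ k)) ≤ (4 * 2⁻¹ ^ k : ℝ≥0) := by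
    refine ediam_le fun y hy z hz => ?_
    rw [edist_nndist, ENNReal.coe_le_coe, ← NNReal.coe_le_coe, coe_nndist]
    push_cast
    linarith [dist_triangle_right y z x, mem_ball.1 hy, mem_ball.1 hz]
  calc ediam (ball x (2 * 2⁻¹ ^ k)) ^ t ≤ ((4 * 2⁻¹ ^ k : ℝ≥0) : ℝ≥0∞) ^ t := by gcongr
    _ = (4 : ℝ≥0∞) ^ t * (b ^ k) ^ 2 := by
      have hpow : ((2⁻¹ : ℝ≥0) ^ k) ^ t = (b ^ k) ^ 2 := by
        rw [pow_right_comm, hb, ← NNReal.rpow_natCast, ← NNReal.rpow_natCast, ← NNReal.rpow_mul,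
          ← NNReal.rpow_mul, mul_comm]
      rw [← ENNReal.coe_rpow_of_nonneg _ ht, NNReal.mul_rpow, hpow, ENNReal.coe_mul,
        ENNReal.coe_rpow_of_nonneg _ ht, ENNReal.coe_pow, ENNReal.coe_pow]
      rfl

namespace IsDyadicNet

theorem tsum_mul_dyadicKernel_le (hN : IsDyadicNet N M) (k : ℕ) {u : N k → ℝ≥0∞} {B : ℝ≥0∞}
    (hu : ∀ z : N k, x ∈ ball (z : X) (2 * 2⁻¹ ^ k) → u z ≤ B) :
    ∑' z, u z * dyadicKernel N a ⟨k, z⟩ x ≤ M * (B * a ^ k) := by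
  refine tsum_le_mul_of_encard_le (S := {z : N k | x ∈ ball (z : X) (2 * 2⁻¹ ^ k)}) ?_
    (fun z hz => ?_) fun z hz => ?_
  · rw [← Subtype.val_injective.encard_image]
    refine (encard_le_encard ?_).trans (hN.encard_le k x)
    rintro _ ⟨z, hz, rfl⟩
    exact ⟨z.2, mem_closedBall_comm.1 (ball_subset_closedBall hz)⟩
  · rw [dyadicKernel_eq_zero hz, ENNReal.coe_zero, mul_zero]
  · rw [← ENNReal.coe_pow]
    gcongr
    exacts [hu z hz, dyadicKernel_le_pow ⟨k, z⟩]

theorem potential_dyadicKernel_le (hN : IsDyadicNet N M) {c : ℝ≥0}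
    {g : lp (fun _ : Σ k, N k => ℝ) 2}
    (hg : ∀ i : Σ k, N k, x ∈ ball (i.2 : X) (2 * 2⁻¹ ^ i.1) →
      ENNReal.ofReal (g i) ≤ c * b ^ i.1) :
    potential (dyadicKernel N a) g x ≤ c * (M * (1 - a * b : ℝ≥0∞)⁻¹) := by
  calc potential (dyadicKernel N a) g x
      = ∑' (k : ℕ) (z : N k), ENNReal.ofReal (g ⟨k, z⟩) * dyadicKernel N a ⟨k, z⟩ x :=
        ENNReal.tsum_sigma' _
    _ ≤ ∑' k : ℕ, (M : ℝ≥0∞) * (c * b ^ k * a ^ k) :=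
        ENNReal.tsum_le_tsum fun k => hN.tsum_mul_dyadicKernel_le k fun z => hg ⟨k, z⟩
    _ = ∑' k : ℕ, (c : ℝ≥0∞) * (M * (a * b) ^ k) := by congr! 2 with k; ring
    _ = c * (M * (1 - a * b : ℝ≥0∞)⁻¹) := by
        rw [ENNReal.tsum_mul_left, ENNReal.tsum_mul_left, ENNReal.tsum_geometric]

-- Otherwise the potential at `x` would be a geometric series of small sum.
theorem exists_pos_forall_exists_le_of_one_le_potential (hN : IsDyadicNet N M) (hab : a * b < 1) :
    ∃ c : ℝ≥0, 0 < c ∧ ∀ (g : lp (fun _ : Σ k, N k => ℝ) 2) (x : X),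
      1 ≤ potential (dyadicKernel N a) g x →
      ∃ i : Σ k, N k, x ∈ ball (i.2 : X) (2 * 2⁻¹ ^ i.1) ∧ c * b ^ i.1 ≤ ENNReal.ofReal (g i) := by
  have hfin : (M : ℝ≥0∞) * (1 - a * b : ℝ≥0∞)⁻¹ ≠ ⊤ :=
    ENNReal.mul_ne_top (ENNReal.natCast_ne_top M)
      (ENNReal.inv_ne_top.2 (tsub_pos_of_lt (by exact_mod_cast hab)).ne')
  obtain ⟨c, hc, hlt⟩ := ENNReal.exists_nnreal_pos_mul_lt hfin one_ne_zero
  refine ⟨c, hc, fun g x hx => ?_⟩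
  by_contra! hsmall
  exact ((hN.potential_dyadicKernel_le fun i hi => (hsmall i hi).le).trans_lt hlt).not_ge hx

theorem exists_cover_of_mem_majorants (hN : IsDyadicNet N M) {t : ℝ} (ht : 0 < t)
    (hb : b ^ 2 = 2⁻¹ ^ t) (hab : a * b < 1) :
    ∃ C : ℝ≥0, ∀ (A : Set X), ∀ g ∈ majorants (dyadicKernel N a) (A.indicator 1),
      ∃ T : (Σ k, N k) → Set X, A ⊆ ⋃ i, T i ∧ ∑' i, ediam (T i) ^ t ≤ C * ‖g‖ₑ ^ 2 := by
  obtain ⟨c, hc, hbig⟩ := hN.exists_pos_forall_exists_le_of_one_le_potential hab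
  refine ⟨4 ^ t / c ^ 2, fun A g hg => ?_⟩
  have hc4 : ((4 ^ t / c ^ 2 : ℝ≥0) : ℝ≥0∞) * c ^ 2 = 4 ^ t := by
    rw [← ENNReal.coe_pow, ← ENNReal.coe_mul, div_mul_cancel₀ _ (pow_ne_zero 2 hc.ne'),
      ENNReal.coe_rpow_of_nonneg _ ht.le]
    rfl
  let T : (Σ k, N k) → Set X := fun i =>
    {x | x ∈ ball (i.2 : X) (2 * 2⁻¹ ^ i.1) ∧ c * b ^ i.1 ≤ ENNReal.ofReal (g i)}
  have hT : ∀ i, ediam (T i) ^ t ≤ (4 ^ t / c ^ 2 : ℝ≥0) * ENNReal.ofReal (g i) ^ 2 := fun i => by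
    by_cases hi : c * b ^ i.1 ≤ ENNReal.ofReal (g i)
    · calc ediam (T i) ^ t ≤ ediam (ball (i.2 : X) (2 * 2⁻¹ ^ i.1)) ^ t := by
            gcongr
            exact fun x hx => hx.1
        _ ≤ 4 ^ t * (b ^ i.1) ^ 2 := ediam_ball_rpow_le ht.le hb (i.2 : X) i.1
        _ = (4 ^ t / c ^ 2 : ℝ≥0) * (c * b ^ i.1) ^ 2 := by
          rw [mul_pow, ← mul_assoc, hc4]
        _ ≤ (4 ^ t / c ^ 2 : ℝ≥0) * ENNReal.ofReal (g i) ^ 2 := by gcongr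
    · have hempty : T i = ∅ := eq_empty_of_forall_notMem fun x hx => hi hx.2
      rw [hempty, ediam_empty, ENNReal.zero_rpow_of_pos ht]
      exact zero_le
  refine ⟨T, fun x hx => mem_iUnion.2 (hbig g x ((mem_majorants_indicator_one_iff.1 hg).2 x hx)),
    ?_⟩
  calc ∑' i, ediam (T i) ^ t
      ≤ ∑' i, (4 ^ t / c ^ 2 : ℝ≥0) * ENNReal.ofReal (g i) ^ 2 := ENNReal.tsum_le_tsum hT
    _ ≤ (4 ^ t / c ^ 2 : ℝ≥0) * ‖g‖ₑ ^ 2 := by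
      rw [ENNReal.tsum_mul_left]
      gcongr
      exact tsum_ofReal_sq_le_enorm_sq g

end IsDyadicNet

end DyadicKernel

section LocalDimension

open scoped ENNReal NNReal Topology

variable {X : Type*} [MetricSpace X] [MeasurableSpace X] {μ : Measure X} {x : X} {s : ℝ}

theorem lowerLocalDim_nonneg [IsProbabilityMeasure μ] : 0 ≤ lowerLocalDim μ x := by
  refine le_liminf_of_le (by isBoundedDefault) ?_
  filter_upwards [Ioo_mem_nhdsGT one_pos] with r hr
  have hr : Real.log r ≤ 0 := Real.log_nonpos hr.1.le hr.2.le
  have hμ : Real.log (μ (ball x r)).toReal ≤ 0 :=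
    Real.log_nonpos ENNReal.toReal_nonneg measureReal_le_one
  exact_mod_cast div_nonneg_of_nonpos hμ hr

theorem lowerHausdorffDim_nonneg [IsProbabilityMeasure μ] : 0 ≤ lowerHausdorffDim μ :=
  le_essInf_of_ae_le _ (.of_forall fun _ => lowerLocalDim_nonneg)

-- Outside the support `lowerLocalDim` takes junk values, because `Real.log 0 = 0`.
theorem le_lowerLocalDim_of_eventually_measure_ball_le (hx : x ∈ μ.support)
    (h : ∀ᶠ r in 𝓝[>] (0 : ℝ), μ (ball x r) ≤ ENNReal.ofReal (r ^ s)) :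
    (s : EReal) ≤ lowerLocalDim μ x := by
  refine le_liminf_of_le (by isBoundedDefault) ?_
  filter_upwards [h, Ioo_mem_nhdsGT one_pos] with r hμ ⟨hr0, hr1⟩
  have hpos : 0 < (μ (ball x r)).toReal :=
    ENNReal.toReal_pos ((Measure.mem_support_iff_forall x).1 hx _ (ball_mem_nhds x hr0)).ne'
      (ne_top_of_le_ne_top ENNReal.ofReal_ne_top hμ)
  rw [EReal.coe_le_coe_iff, le_div_iff_of_neg (Real.log_neg hr0 hr1), ← Real.log_rpow hr0]
  exact Real.log_le_log hpos (ENNReal.toReal_le_of_le_ofReal (by positivity) hμ)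

theorem le_lowerLocalDim_of_eventually_measure_ball_le_mul (hx : x ∈ μ.support) {C : ℝ≥0}
    (h : ∀ᶠ r in 𝓝[>] (0 : ℝ), μ (ball x r) ≤ C * ENNReal.ofReal (r ^ s)) :
    (s : EReal) ≤ lowerLocalDim μ x := by
  refine EReal.ge_of_forall_gt_iff_ge.1 fun t ht => ?_
  have hts : 0 < s - t := sub_pos.2 (EReal.coe_lt_coe_iff.1 ht)
  have hlim : Tendsto (fun r : ℝ => C * r ^ (s - t)) (𝓝[>] 0) (𝓝 0) := by
    have := (Real.continuousAt_rpow_const 0 (s - t) (.inr hts.le)).tendsto.const_mul (C : ℝ)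
    rw [Real.zero_rpow hts.ne', mul_zero] at this
    exact this.mono_left nhdsWithin_le_nhds
  refine le_lowerLocalDim_of_eventually_measure_ball_le hx ?_
  filter_upwards [h, hlim.eventually_lt_const one_pos, self_mem_nhdsWithin] with r hμ hC hr
  calc μ (ball x r) ≤ C * ENNReal.ofReal (r ^ s) := hμ
    _ = ENNReal.ofReal (C * r ^ (s - t) * r ^ t) := by
      rw [mul_assoc, ← Real.rpow_add hr, sub_add_cancel, ENNReal.ofReal_mul C.coe_nonneg,
        ENNReal.ofReal_coe_nnreal]
    _ ≤ ENNReal.ofReal (r ^ t) :=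
      ENNReal.ofReal_le_ofReal (mul_le_of_le_one_left (Real.rpow_nonneg (le_of_lt hr) t) hC.le)

theorem eventually_measure_ball_le_of_lt_lowerLocalDim [IsFiniteMeasure μ]
    (h : (s : EReal) < lowerLocalDim μ x) :
    ∀ᶠ r in 𝓝[>] (0 : ℝ), μ (ball x r) ≤ ENNReal.ofReal (r ^ s) := by
  filter_upwards [eventually_lt_of_lt_liminf h, Ioo_mem_nhdsGT one_pos] with r hμ ⟨hr0, hr1⟩
  rcases eq_or_ne (μ (ball x r)) 0 with h0 | h0
  · rw [h0]
    exact zero_le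
  have hpos : 0 < (μ (ball x r)).toReal := ENNReal.toReal_pos h0 (measure_ne_top μ _)
  rw [EReal.coe_lt_coe_iff, lt_div_iff_of_neg (Real.log_neg hr0 hr1), ← Real.log_rpow hr0,
    Real.log_lt_log_iff hpos (by positivity)] at hμ
  exact ENNReal.le_ofReal_iff_toReal_le (measure_ne_top μ _) (by positivity) |>.2 hμ.le

theorem measure_inter_le_ediam_rpow (hs : 0 ≤ s) {δ : ℝ} {A U : Set X}
    (hA : ∀ x ∈ A, ∀ r ∈ Ioo 0 δ, μ (ball x r) ≤ ENNReal.ofReal (r ^ s))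
    (hU : ediam U < ENNReal.ofReal δ) : μ (U ∩ A) ≤ ediam U ^ s := by
  rcases (U ∩ A).eq_empty_or_nonempty with hempty | ⟨x, hxU, hxA⟩
  · rw [hempty, measure_empty]
    exact zero_le
  lift ediam U to ℝ≥0 using hU.ne_top with D hD
  have hDδ : (D : ℝ) < δ := by
    rwa [← ENNReal.ofReal_coe_nnreal, ENNReal.ofReal_lt_ofReal_iff_of_nonneg D.coe_nonneg] at hU
  have hball : ∀ r > (D : ℝ), U ∩ A ⊆ ball x r := fun r hr y hy => by
    have : edist y x ≤ D := (edist_le_ediam_of_mem hy.1 hxU).trans_eq hD.symm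
    rw [edist_nndist, ENNReal.coe_le_coe, ← NNReal.coe_le_coe] at this
    exact this.trans_lt hr
  have hlim : Tendsto (fun r : ℝ => ENNReal.ofReal (r ^ s)) (𝓝[>] D) (𝓝 ((D : ℝ≥0∞) ^ s)) := by
    rw [← ENNReal.ofReal_coe_nnreal, ENNReal.ofReal_rpow_of_nonneg D.coe_nonneg hs]
    exact ENNReal.tendsto_ofReal
      ((Real.continuousAt_rpow_const D s (.inr hs)).tendsto.mono_left nhdsWithin_le_nhds)
  refine ge_of_tendsto hlim ?_
  filter_upwards [Ioo_mem_nhdsGT hDδ] with r hr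
  exact (measure_mono (hball r hr.1)).trans (hA x hxA r ⟨D.coe_nonneg.trans_lt hr.1, hr.2⟩)

variable [BorelSpace X]

theorem measure_le_hausdorffMeasure_of_measure_ball_le (hs : 0 ≤ s) {δ : ℝ} (hδ : 0 < δ)
    {A : Set X} (hA : ∀ x ∈ A, ∀ r ∈ Ioo 0 δ, μ (ball x r) ≤ ENNReal.ofReal (r ^ s)) :
    μ A ≤ μH[s] A := by
  have hle : μ.restrict A ≤ μH[s] := by
    refine Measure.le_hausdorffMeasure s _ (ENNReal.ofReal (δ / 2)) (by simpa using hδ)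
      fun U hU => ?_
    rw [← ediam_closure] at hU ⊢
    calc μ.restrict A U ≤ μ.restrict A (closure U) := measure_mono subset_closure
      _ = μ (closure U ∩ A) := Measure.restrict_apply isClosed_closure.measurableSet
      _ ≤ ediam (closure U) ^ s := measure_inter_le_ediam_rpow hs hA <|
          hU.trans_lt ((ENNReal.ofReal_lt_ofReal_iff hδ).2 (half_lt_self hδ))
  simpa only [Measure.restrict_apply_self] using hle A

theorem measure_eq_zero_of_hausdorffMeasure_eq_zero (hs : 0 ≤ s) {A : Set X}
    (hA : ∀ x ∈ A, ∀ᶠ r in 𝓝[>] (0 : ℝ), μ (ball x r) ≤ ENNReal.ofReal (r ^ s))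
    (hzero : μH[s] A = 0) : μ A = 0 := by
  let B : ℕ → Set X := fun n =>
    {x ∈ A | ∀ r ∈ Ioo 0 (1 / (n + 1 : ℝ)), μ (ball x r) ≤ ENNReal.ofReal (r ^ s)}
  have hB : ∀ n, μ (B n) = 0 := fun n =>
    le_antisymm ((measure_le_hausdorffMeasure_of_measure_ball_le hs Nat.one_div_pos_of_nat
      fun x hx => hx.2).trans ((measure_mono fun x hx => hx.1).trans_eq hzero)) zero_le
  refine measure_mono_null (fun x hx => ?_) (measure_iUnion_null hB)
  obtain ⟨δ, hδ, hball⟩ := mem_nhdsGT_iff_exists_Ioo_subset.1 (hA x hx)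
  obtain ⟨n, hn⟩ := exists_nat_one_div_lt (mem_Ioi.1 hδ)
  exact mem_iUnion.2 ⟨n, hx, fun r hr => hball ⟨hr.1, hr.2.trans hn⟩⟩

theorem lowerHausdorffDim_le_dimH [IsFiniteMeasure μ] {E : Set X} (hE : μ E ≠ 0) :
    lowerHausdorffDim μ ≤ (dimH E : EReal) := by
  refine EReal.ge_of_forall_gt_iff_ge.1 fun s hs => le_of_not_gt fun hlt => hE ?_
  have hs0 : 0 ≤ s := by exact_mod_cast ((EReal.coe_ennreal_nonneg _).trans_lt hlt).le
  lift s to ℝ≥0 using hs0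
  have hzero : μH[s] E = 0 :=
    hausdorffMeasure_of_dimH_lt (EReal.coe_ennreal_lt_coe_ennreal_iff.1 hlt)
  let A : Set X := {x | (s : EReal) < lowerLocalDim μ x}
  have hEA : μ (E ∩ A) = 0 := measure_eq_zero_of_hausdorffMeasure_eq_zero s.coe_nonneg
    (fun x hx => eventually_measure_ball_le_of_lt_lowerLocalDim hx.2)
    (measure_mono_null inter_subset_left hzero)
  have hA : A ∈ ae μ := ae_lt_of_lt_essInf hs
  exact (measure_inter_conull hA).symm.trans hEA

end LocalDimension

section FrostmanMeasures

open scoped ENNReal NNReal Topology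

theorem ae_tsum_lintegral_mul_lt_top {I X : Type*} [Countable I] [MeasurableSpace X]
    {μ : Measure X} {ψ : I → X → ℝ≥0} (hψ : ∀ i, Measurable (ψ i)) (h : energy ψ μ < ⊤) :
    ∀ᵐ x ∂μ, ∑' i, (∫⁻ y, ψ i y ∂μ) * ψ i x < ⊤ := by
  have hmeas : ∀ i, Measurable fun x => (∫⁻ y, ψ i y ∂μ) * ψ i x := fun i =>
    (hψ i).coe_nnreal_ennreal.const_mul _
  refine ae_lt_top (.tsum hmeas) (ne_of_lt ?_)
  calc ∫⁻ x, ∑' i, (∫⁻ y, ψ i y ∂μ) * ψ i x ∂μ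
      = ∑' i, ∫⁻ x, (∫⁻ y, ψ i y ∂μ) * ψ i x ∂μ := lintegral_tsum fun i => (hmeas i).aemeasurable
    _ = energy ψ μ := by
        refine tsum_congr fun i => ?_
        rw [lintegral_const_mul _ (hψ i).coe_nnreal_ennreal, sq]
    _ < ⊤ := h

theorem eventually_measure_ball_le_mul_of_forall_pow {X : Type*} [PseudoMetricSpace X]
    [MeasurableSpace X] {μ : Measure X} {x : X} {s : ℝ} (hs : 0 ≤ s) {C : ℝ≥0}
    (h : ∀ k : ℕ, μ (ball x (2⁻¹ ^ k / 2)) ≤ C * ENNReal.ofReal ((2⁻¹ ^ k) ^ s)) :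
    ∀ᶠ r in 𝓝[>] (0 : ℝ), μ (ball x r) ≤ (C * 4 ^ s : ℝ≥0) * ENNReal.ofReal (r ^ s) := by
  filter_upwards [Ioo_mem_nhdsGT (show (0 : ℝ) < 2⁻¹ by norm_num)] with r ⟨hr0, hr2⟩
  obtain ⟨k, hk, hkr⟩ := exists_nat_pow_near_of_lt_one (x := 2 * r) (y := (2⁻¹ : ℝ))
    (by linarith) (by linarith) (by norm_num) (by norm_num)
  rw [pow_succ] at hk
  calc μ (ball x r) ≤ μ (ball x (2⁻¹ ^ k / 2)) := measure_mono (ball_subset_ball (by linarith))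
    _ ≤ C * ENNReal.ofReal ((2⁻¹ ^ k) ^ s) := h k
    _ ≤ C * ENNReal.ofReal ((4 * r) ^ s) := by gcongr; linarith
    _ = (C * 4 ^ s : ℝ≥0) * ENNReal.ofReal (r ^ s) := by
      have h4 : ENNReal.ofReal (4 ^ s) = ((4 ^ s : ℝ≥0) : ℝ≥0∞) := by
        rw [← ENNReal.ofReal_coe_nnreal, NNReal.coe_rpow]
        rfl
      rw [Real.mul_rpow (by norm_num) hr0.le, ENNReal.ofReal_mul (by positivity), h4,
        ENNReal.coe_mul, mul_assoc]

namespace IsDyadicNet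

theorem pow_sq_mul_measure_ball_le {X : Type*} [PseudoMetricSpace X] [MeasurableSpace X]
    [OpensMeasurableSpace X] {N : ℕ → Set X} {M : ℕ} (hN : IsDyadicNet N M) (a : ℝ≥0)
    (μ : Measure X) (x : X) (k : ℕ) :
    ((a ^ 2) ^ k : ℝ≥0) * μ (ball x (2⁻¹ ^ k / 2)) ≤
      ∑' i, (∫⁻ y, dyadicKernel N a i y ∂μ) * dyadicKernel N a i x := by
  obtain ⟨z, hz, hxz⟩ := hN.exists_dist_le k x
  let i : Σ k, N k := ⟨k, z, hz⟩
  have hball : ∀ y ∈ ball x (2⁻¹ ^ k / 2), dyadicKernel N a i y = a ^ k := fun y hy =>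
    dyadicKernel_eq_pow (by
      change dist y z ≤ 3 / 2 * 2⁻¹ ^ k
      linarith [dist_triangle y x z, mem_ball.1 hy])
  have hlintegral : (a ^ k : ℝ≥0) * μ (ball x (2⁻¹ ^ k / 2)) ≤ ∫⁻ y, dyadicKernel N a i y ∂μ := by
    rw [← setLIntegral_const]
    exact (setLIntegral_mono' isOpen_ball.measurableSet fun y hy =>
      (ENNReal.coe_le_coe.2 (hball y hy).ge)).trans (setLIntegral_le_lintegral _ _)
  calc ((a ^ 2) ^ k : ℝ≥0) * μ (ball x (2⁻¹ ^ k / 2))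
      = (a ^ k : ℝ≥0) * μ (ball x (2⁻¹ ^ k / 2)) * dyadicKernel N a i x := by
        rw [hball x (mem_ball_self (by positivity)), pow_right_comm, sq, ENNReal.coe_mul]
        ring
    _ ≤ (∫⁻ y, dyadicKernel N a i y ∂μ) * dyadicKernel N a i x := by gcongr
    _ ≤ ∑' i, (∫⁻ y, dyadicKernel N a i y ∂μ) * dyadicKernel N a i x := ENNReal.le_tsum i

theorem countable_sigma {X : Type*} [PseudoMetricSpace X] {N : ℕ → Set X} {M : ℕ}
    (hN : IsDyadicNet N M) : Countable (Σ k, N k) :=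
  haveI := fun k => (hN.countable k).to_subtype
  inferInstance

variable {X : Type*} [MetricSpace X] [MeasurableSpace X] [BorelSpace X] {N : ℕ → Set X} {M : ℕ}
  {a b : ℝ≥0}

theorem le_lowerHausdorffDim_of_energy_lt_top [SecondCountableTopology X] (hN : IsDyadicNet N M)
    {s : ℝ} (hs : 0 ≤ s) (ha : a ^ 2 = 2 ^ s) {μ : Measure X}
    (h : energy (dyadicKernel N a) μ < ⊤) : (s : EReal) ≤ lowerHausdorffDim μ := by
  have := hN.countable_sigma
  refine le_essInf_of_ae_le _ ?_
  filter_upwards [Measure.support_mem_ae,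
    ae_tsum_lintegral_mul_lt_top (fun i => (continuous_dyadicKernel N a i).measurable) h]
    with x hx hfin
  obtain ⟨C, hC⟩ := WithTop.ne_top_iff_exists.1 hfin.ne
  refine le_lowerLocalDim_of_eventually_measure_ball_le_mul hx
    (eventually_measure_ball_le_mul_of_forall_pow hs (C := C) fun k => ?_)
  have hcancel : ((a ^ 2) ^ k : ℝ≥0) * ENNReal.ofReal ((2⁻¹ ^ k) ^ s) = 1 := by
    have hreal : ((2 : ℝ) ^ s) ^ k * (2⁻¹ ^ k) ^ s = 1 := by
      rw [Real.rpow_pow_comm (by norm_num), ← Real.mul_rpow (by positivity) (by positivity),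
        ← mul_pow, mul_inv_cancel₀ two_ne_zero, one_pow, Real.one_rpow]
    rw [ha, ← ENNReal.ofReal_coe_nnreal, ← ENNReal.ofReal_mul NNReal.zero_le_coe,
      NNReal.coe_pow, NNReal.coe_rpow, NNReal.coe_ofNat, hreal, ENNReal.ofReal_one]
  calc μ (ball x (2⁻¹ ^ k / 2))
      = ((a ^ 2) ^ k : ℝ≥0) * μ (ball x (2⁻¹ ^ k / 2)) * ENNReal.ofReal ((2⁻¹ ^ k) ^ s) := by
        rw [mul_right_comm, hcancel, one_mul]
    _ ≤ C * ENNReal.ofReal ((2⁻¹ ^ k) ^ s) := by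
        gcongr
        exact (hN.pow_sq_mul_measure_ball_le a μ x k).trans_eq hC.symm

theorem hausdorffMeasure_eq_zero_of_capacity_eq_zero (hN : IsDyadicNet N M) {t : ℝ} (ht : 0 < t)
    (hb : b ^ 2 = 2⁻¹ ^ t) (hab : a * b < 1) {A : Set X} (hA : capacity (dyadicKernel N a) A = 0) :
    μH[t] A = 0 := by
  have := hN.countable_sigma
  obtain ⟨C, hC⟩ := hN.exists_cover_of_mem_majorants ht hb hab
  refine hausdorffMeasure_eq_zero_of_forall_exists_cover (ι := Σ k, N k) ht fun ε hε => ?_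
  obtain ⟨η, hη, hηC⟩ := ENNReal.exists_nnreal_pos_mul_lt (ENNReal.coe_ne_top (r := C))
    (ENNReal.coe_ne_zero.2 hε.ne')
  obtain ⟨g, hg, hgη⟩ := upperNorm_lt_iff.1
    (hA.trans_lt (ENNReal.coe_pos.2 (NNReal.sqrt_pos.2 hη)))
  obtain ⟨T, hAT, hT⟩ := hC A g hg
  refine ⟨T, hAT, hT.trans ?_⟩
  calc (C : ℝ≥0∞) * ‖g‖ₑ ^ 2 ≤ C * (NNReal.sqrt η : ℝ≥0∞) ^ 2 := by gcongr
    _ = (η : ℝ≥0∞) * C := by rw [← ENNReal.coe_pow, NNReal.sq_sqrt, mul_comm]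
    _ ≤ (ε : ℝ≥0∞) := hηC.le

end IsDyadicNet

variable {X : Type*} [MetricSpace X] [MeasurableSpace X] [BorelSpace X]
  [SecondCountableTopology X] {E : Set X}

theorem UniformlyLocallyDoubling.exists_isProbabilityMeasure_le_lowerHausdorffDim
    (hX : UniformlyLocallyDoubling X) (hE : AnalyticSet E) {s : ℝ≥0} (hs : s < dimH E) :
    ∃ μ : Measure X, IsProbabilityMeasure μ ∧ μ E = 1 ∧ (s : EReal) ≤ lowerHausdorffDim μ := by
  obtain ⟨N, M, hN⟩ := hX.exists_isDyadicNet
  obtain ⟨t, hst, htE⟩ := ENNReal.lt_iff_exists_nnreal_btwn.1 hs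
  rw [ENNReal.coe_lt_coe] at hst
  let a : ℝ≥0 := 2 ^ (s / 2 : ℝ)
  let b : ℝ≥0 := 2⁻¹ ^ (t / 2 : ℝ)
  have ha : a ^ 2 = 2 ^ (s : ℝ) := by
    rw [← NNReal.rpow_mul_natCast, Nat.cast_ofNat, div_mul_cancel₀ _ two_ne_zero]
  have hb : b ^ 2 = 2⁻¹ ^ (t : ℝ) := by
    rw [← NNReal.rpow_mul_natCast, Nat.cast_ofNat, div_mul_cancel₀ _ two_ne_zero]
  have hab : a * b < 1 := by
    calc a * b < 2 ^ (t / 2 : ℝ) * 2⁻¹ ^ (t / 2 : ℝ) := by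
          refine mul_lt_mul_of_pos_right (NNReal.rpow_lt_rpow_of_exponent_lt one_lt_two ?_)
            (NNReal.rpow_pos (by norm_num))
          gcongr
      _ = 1 := by rw [← NNReal.mul_rpow, mul_inv_cancel₀ two_ne_zero, NNReal.one_rpow]
  have hpos : ∀ x, ∃ i, 0 < dyadicKernel N a i x := fun x => by
    obtain ⟨z, hz, hxz⟩ := hN.exists_dist_le 0 x
    refine ⟨⟨0, z, hz⟩, ?_⟩
    rw [dyadicKernel_eq_pow (hxz.trans (by norm_num)), pow_zero]
    exact one_pos
  have hcap : capacity (dyadicKernel N a) E ≠ 0 := fun hzero => by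
    have := hN.hausdorffMeasure_eq_zero_of_capacity_eq_zero (hst.bot_lt) hb hab hzero
    exact ENNReal.top_ne_zero ((hausdorffMeasure_of_lt_dimH htE).symm.trans this)
  obtain ⟨μ, hμ, hμE, henergy⟩ := exists_isProbabilityMeasure_energy_lt_top
    (continuous_dyadicKernel N a) hpos hE hcap.bot_lt
  exact ⟨μ, hμ, hμE, hN.le_lowerHausdorffDim_of_energy_lt_top s.coe_nonneg ha henergy⟩

theorem stmt1_general (hX : UniformlyLocallyDoubling X) (hne : E.Nonempty) (hE : AnalyticSet E) :
    (dimH E : EReal) = ⨆ (μ : Measure X) (_ : IsProbabilityMeasure μ) (_ : μ E = 1),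
      lowerHausdorffDim μ := by
  refine le_antisymm (EReal.ge_of_forall_gt_iff_ge.1 fun s hs => ?_) ?_
  · obtain ⟨μ, hμ, hμE, hsμ⟩ : ∃ μ : Measure X, IsProbabilityMeasure μ ∧ μ E = 1 ∧
        (s : EReal) ≤ lowerHausdorffDim μ := by
      rcases lt_or_ge s 0 with hs0 | hs0
      · obtain ⟨x, hx⟩ := hne
        exact ⟨.dirac x, inferInstance, Measure.dirac_apply_of_mem hx,
          (EReal.coe_nonpos.2 hs0.le).trans lowerHausdorffDim_nonneg⟩
      · lift s to ℝ≥0 using hs0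
        exact hX.exists_isProbabilityMeasure_le_lowerHausdorffDim hE
          (EReal.coe_ennreal_lt_coe_ennreal_iff.1 hs)
    exact hsμ.trans (le_iSup₂_of_le μ hμ (le_iSup_of_le hμE le_rfl))
  · refine iSup₂_le fun μ hμ => iSup_le fun hμE => lowerHausdorffDim_le_dimH ?_
    rw [hμE]
    exact one_ne_zero

end FrostmanMeasures

/-- For a nonempty Borel set `E ⊆ ℝ^d`, the Hausdorff dimension of `E`
equals the supremum of the lower Hausdorff dimensions of Borel probability measures `μ`
with `μ E = 1`. -/
theorem stmt1 (d : ℕ) (hd : 0 < d) (E : Set (EuclideanSpace ℝ (Fin d)))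
    (hne : E.Nonempty) (hE : MeasurableSet E) :
    (dimH E : EReal) =
      ⨆ (μ : Measure (EuclideanSpace ℝ (Fin d))) (_ : IsProbabilityMeasure μ) (_ : μ E = 1),
        lowerHausdorffDim μ :=
  stmt1_general (uniformlyLocallyDoubling_of_finiteDimensional _) hne hE.analyticSet
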